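/- The group P_3 is presented by generators c_{11}, c_{21}, c_{12} and relations (for ε = ±1) c_{21}^{c_{11}^ε} = c_{21} and c_{12}^{c_{11}^ε} = c_{12}^{c_{21}^{−ε}}. Consequently the subgroup T_2^c = ⟨c_{21}, c_{12}⟩ of P_3 is a normal free subgroup freely generated by c_{21} and c_{12}, the subgroup ⟨c_{11}⟩ is infinite cyclic, and P_3 is the internal semidirect product P_3 = T_2^c ⋊ ⟨c_{11}⟩. -/

import Mathlib

/-!
Write `a, x, y` for `A_{12}, A_{13}, A_{23}` and `c, d, b` for `c_{11}, c_{21}, c_{12}`. The relations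
of `P_3` say exactly that `a x y` is central, and the relations in the `c_{ij}` say exactly that `d c` is
central. The substitutions `c = a⁻¹`, `d = (x y)⁻¹`, `b = x⁻¹ a⁻¹` and `a = c⁻¹`, `x = c b⁻¹`,
`y = b c⁻¹ d⁻¹` are mutually inverse and exchange `a x y` with `(d c)⁻¹` (using that `c` and `d` commute),
so they carry each set of relations into consequences of the other. This is the presentation by `c, d, b`.

Two homomorphisms out of `P_3` give the rest. Sending `d, b` to a free basis and `c` to `d⁻¹` (so that
`d c` is killed) retracts `P_3` onto the free group of rank two, so `d, b` generate freely. Sending `c` to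
a generator of `ℤ` and `d, b` to `0` shows that `c` has infinite order and that `⟨c⟩` meets `⟨d, b⟩`
trivially. Finally `c = d⁻¹ (d c)` is the product of an element of `⟨d, b⟩` and a central element, so it
normalizes `⟨d, b⟩`, and `⟨d, b⟩` is normal.
-/

namespace Paper

/-- Conjugation `a^b = b⁻¹ * a * b`. -/
def cj {G : Type*} [Group G] (a b : G) : G := b⁻¹ * a * b

/-- Generators `A_{1,2}, A_{1,3}, A_{2,3}` of the pure braid group `P_3`. -/
inductive P3Gen
  | A12 | A13 | A23
  deriving DecidableEq

namespace P3Gen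
open FreeGroup
/-- The defining relations of `P_3` (`ε = ±1`):
`A_{1,2}^{-ε}A_{2,3}A_{1,2}^{ε} = (A_{1,3}A_{2,3})^{ε}A_{2,3}(A_{1,3}A_{2,3})^{-ε}` and
`A_{1,2}^{-ε}A_{1,3}A_{1,2}^{ε} = (A_{1,3}A_{2,3})^{ε}A_{1,3}(A_{1,3}A_{2,3})^{-ε}`. -/
def rels : Set (FreeGroup P3Gen) :=
  {r | ∃ e : ℤ, (e = 1 ∨ e = -1) ∧
    (r = (of A12) ^ (-e) * of A23 * (of A12) ^ e *
         ((of A13 * of A23) ^ e * of A23 * (of A13 * of A23) ^ (-e))⁻¹ ∨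
     r = (of A12) ^ (-e) * of A13 * (of A12) ^ e *
         ((of A13 * of A23) ^ e * of A13 * (of A13 * of A23) ^ (-e))⁻¹)}
end P3Gen

/-- The pure braid group `P_3`, given by its presentation. -/
abbrev P3 := PresentedGroup P3Gen.rels

/-- `c_{11} = A_{12}⁻¹`. -/
def c11 : P3 := (PresentedGroup.of P3Gen.A12)⁻¹
/-- `c_{21} = A_{23}⁻¹A_{13}⁻¹`. -/
def c21 : P3 := (PresentedGroup.of P3Gen.A23)⁻¹ * (PresentedGroup.of P3Gen.A13)⁻¹
/-- `c_{12} = A_{13}⁻¹A_{12}⁻¹`. -/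
def c12 : P3 := (PresentedGroup.of P3Gen.A13)⁻¹ * (PresentedGroup.of P3Gen.A12)⁻¹

/-- Abstract generators for the presentation of `P_3` in the `c_{ij}` generators. -/
inductive CGen3
  | g11 | g21 | g12
  deriving DecidableEq

namespace CGen3
open FreeGroup
/-- The relations `c_{21}^{c_{11}^ε} = c_{21}` and `c_{12}^{c_{11}^ε} = c_{12}^{c_{21}^{-ε}}`
(`ε = ±1`). -/
def rels : Set (FreeGroup CGen3) :=
  {r | ∃ e : ℤ, (e = 1 ∨ e = -1) ∧
    (r = cj (of g21) (of g11 ^ e) * (of g21)⁻¹ ∨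
     r = cj (of g12) (of g11 ^ e) * (cj (of g12) (of g21 ^ (-e)))⁻¹)}
end CGen3

section Relations
variable {G : Type*} [Group G]

/-- If `x` and `y` commute with `a x y`, then so does `a`; equivalently, `a` commutes with `x y`. -/
lemma commute_of_commute {a x y : G} (hx : Commute x (a * (x * y))) (hy : Commute y (a * (x * y))) :
    Commute a (x * y) := by
  have h := (hx.mul_left hy).eq
  rw [← mul_assoc (x * y)] at h
  exact (mul_right_cancel h).symm

lemma conj_eq_iff {w a u : G} : a⁻¹ * w * a = u * w * u⁻¹ ↔ Commute w (a * u) := by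
  rw [mul_assoc a⁻¹, inv_mul_eq_iff_eq_mul, eq_comm, ← mul_assoc, mul_inv_eq_iff_eq_mul, eq_comm,
    commute_iff_eq]
  simp only [mul_assoc]

lemma conj_inv_eq_iff {w a u : G} : a * w * a⁻¹ = u⁻¹ * w * u ↔ Commute w (u * a) := by
  rw [eq_comm, conj_eq_iff]

/-- A triple of elements satisfies the relations of `P_3` if its product `a x y` is central in the
subgroup it generates. -/
lemma P3Gen.lift_eq_one (v : P3Gen → G)
    (hx : Commute (v .A13) (v .A12 * (v .A13 * v .A23)))
    (hy : Commute (v .A23) (v .A12 * (v .A13 * v .A23))) :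
    ∀ r ∈ P3Gen.rels, FreeGroup.lift v r = 1 := by
  have ha := commute_of_commute hx hy
  rintro r ⟨e, rfl | rfl, rfl | rfl⟩ <;>
    simp only [map_mul, map_inv, FreeGroup.lift_apply_of, neg_neg, zpow_one,
      zpow_neg, mul_inv_eq_one, conj_eq_iff, conj_inv_eq_iff, ← ha.eq] <;> assumption

/-- A triple of elements satisfies the relations in the `c_{ij}` if `d c` is central in the subgroup it
generates. -/
lemma CGen3.lift_eq_one (v : CGen3 → G) (hd : Commute (v .g21) (v .g11))
    (hb : Commute (v .g12) (v .g21 * v .g11)) :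
    ∀ r ∈ CGen3.rels, FreeGroup.lift v r = 1 := by
  rintro r ⟨e, rfl | rfl, rfl | rfl⟩ <;>
    simp only [cj, map_mul, map_inv, FreeGroup.lift_apply_of, neg_neg, zpow_one, inv_inv,
      zpow_neg, mul_inv_eq_one, conj_eq_iff, conj_inv_eq_iff]
  · rw [mul_assoc, hd.eq, inv_mul_cancel_left]
  · rwa [← hd.eq]
  · rw [← hd.eq, mul_inv_cancel_right]
  · exact hb

end Relations

section Centre
open PresentedGroup

lemma P3.commute_A13 : Commute (of .A13 : P3) (of .A12 * (of .A13 * of .A23)) := by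
  have h := one_of_mem (rels := P3Gen.rels) ⟨1, .inl rfl, .inr rfl⟩
  simp only [map_mul, map_inv, zpow_one, zpow_neg, mul_inv_eq_one, conj_eq_iff] at h
  exact h

lemma P3.commute_A23 : Commute (of .A23 : P3) (of .A12 * (of .A13 * of .A23)) := by
  have h := one_of_mem (rels := P3Gen.rels) ⟨1, .inl rfl, .inl rfl⟩
  simp only [map_mul, map_inv, zpow_one, zpow_neg, mul_inv_eq_one, conj_eq_iff] at h
  exact h

lemma P3.commute_A12 : Commute (of .A12 : P3) (of .A13 * of .A23) :=
  commute_of_commute P3.commute_A13 P3.commute_A23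

lemma c21_mul_c11 : c21 * c11 = (of .A12 * (of .A13 * of .A23) : P3)⁻¹ := by
  simp only [c21, c11, mul_inv_rev]

lemma c21_mul_c11_mem_center : c21 * c11 ∈ Subgroup.center P3 := by
  rw [c21_mul_c11, inv_mem_iff, ← Subgroup.centralizer_univ, ← Subgroup.coe_top,
    ← closure_range_of, Subgroup.centralizer_closure, Subgroup.mem_centralizer_iff]
  rintro _ ⟨_ | _ | _, rfl⟩
  · exact (Commute.refl _).mul_right P3.commute_A12
  · exact P3.commute_A13
  · exact P3.commute_A23

lemma commute_c21_c11 : Commute c21 c11 := by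
  have h := P3.commute_A12.inv_inv
  rw [mul_inv_rev] at h
  exact h.symm

lemma CGen3.commute_g21_g11 :
    Commute (of .g21 : PresentedGroup CGen3.rels) (of .g11) := by
  have h := one_of_mem (rels := CGen3.rels) ⟨1, .inl rfl, .inl rfl⟩
  simp only [cj, map_mul, map_inv, zpow_one, mul_inv_eq_one] at h
  rw [mul_assoc, inv_mul_eq_iff_eq_mul] at h
  exact h

lemma CGen3.commute_g12 :
    Commute (of .g12 : PresentedGroup CGen3.rels) (of .g21 * of .g11) := by
  have h := one_of_mem (rels := CGen3.rels) ⟨1, .inl rfl, .inr rfl⟩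
  simp only [cj, map_mul, map_inv, zpow_one, zpow_neg, inv_inv, mul_inv_eq_one,
    conj_eq_iff] at h
  rw [CGen3.commute_g21_g11.eq]
  exact h

end Centre

section Homs
open PresentedGroup

/-- The change of generators from the `c_{ij}` to `P_3`. -/
def fromC : PresentedGroup CGen3.rels →* P3 :=
  toGroup (f := fun | .g11 => c11 | .g21 => c21 | .g12 => c12) <| by
    apply CGen3.lift_eq_one
    · exact commute_c21_c11
    · exact Subgroup.mem_center_iff.1 c21_mul_c11_mem_center c12

/-- The inverse change of generators: `a = c⁻¹`, `x = c b⁻¹`, `y = b c⁻¹ d⁻¹`. -/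
def toC : P3 →* PresentedGroup CGen3.rels :=
  toGroup (f := fun
    | .A12 => (of .g11)⁻¹
    | .A13 => of .g11 * (of .g12)⁻¹
    | .A23 => of .g12 * (of .g11)⁻¹ * (of .g21)⁻¹) <| by
    have hc : Commute (of .g11 : PresentedGroup CGen3.rels) (of .g21 * of .g11) :=
      CGen3.commute_g21_g11.symm.mul_right (Commute.refl _)
    have hd : Commute (of .g21 : PresentedGroup CGen3.rels) (of .g21 * of .g11) :=
      (Commute.refl _).mul_right CGen3.commute_g21_g11
    have hb := CGen3.commute_g12
    have hz : (of .g11 : PresentedGroup CGen3.rels)⁻¹ *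
        (of .g11 * (of .g12)⁻¹ * (of .g12 * (of .g11)⁻¹ * (of .g21)⁻¹)) =
        (of .g21 * of .g11)⁻¹ := by
      group
    apply P3Gen.lift_eq_one
    · simp only [hz]
      exact (hc.mul_left hb.inv_left).inv_right
    · simp only [hz]
      exact ((hb.mul_left hc.inv_left).mul_left hd.inv_left).inv_right

lemma toC_comp_fromC : toC.comp fromC = MonoidHom.id _ := by
  ext (_ | _ | _) <;> simp [toC, fromC, c11, c21, c12, mul_assoc]

lemma fromC_comp_toC : fromC.comp toC = MonoidHom.id _ := by
  ext (_ | _ | _) <;> simp [toC, fromC, c11, c21, c12]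

lemma fromC_bijective : Function.Bijective fromC :=
  Function.bijective_iff_has_inverse.2
    ⟨toC, DFunLike.congr_fun toC_comp_fromC, DFunLike.congr_fun fromC_comp_toC⟩

/-- The retraction of `P_3` onto the free group on `d = c_{21}` and `b = c_{12}` killing the central
element `c_{21} c_{11}`. -/
def toFree : P3 →* FreeGroup (Fin 2) :=
  toGroup (f := fun
    | .A12 => .of 0
    | .A13 => (.of 0)⁻¹ * (.of 1)⁻¹
    | .A23 => .of 1) <| by
    apply P3Gen.lift_eq_one <;> simp

lemma toFree_comp_lift :
    toFree.comp (FreeGroup.lift (![c21, c12] : Fin 2 → P3)) = MonoidHom.id _ := by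
  ext i
  fin_cases i <;> simp [toFree, c21, c12]

/-- The homomorphism `P_3 → ℤ` with `c_{11} ↦ 1`, `c_{21} ↦ 0` and `c_{12} ↦ 0`. -/
def deg : P3 →* Multiplicative ℤ :=
  toGroup (f := fun
    | .A12 => .ofAdd (-1)
    | .A13 => .ofAdd 1
    | .A23 => .ofAdd (-1)) <| by
    apply P3Gen.lift_eq_one <;> exact Commute.all _ _

lemma deg_c11_zpow (k : ℤ) : deg (c11 ^ k) = .ofAdd k := by
  have h : deg c11 = .ofAdd 1 := by simp [deg, c11]
  rw [map_zpow, h, ← ofAdd_zsmul]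
  simp

lemma closure_le_ker_deg : Subgroup.closure {c21, c12} ≤ deg.ker := by
  rw [Subgroup.closure_le]
  rintro _ (rfl | rfl) <;> simp [deg, c21, c12, MonoidHom.mem_ker]

end Homs

section Subgroups

lemma c21_mem : c21 ∈ Subgroup.closure {c21, c12} := Subgroup.subset_closure (by simp)

lemma c12_mem : c12 ∈ Subgroup.closure {c21, c12} := Subgroup.subset_closure (by simp)

/-- The elements `c_{11}, c_{21}, c_{12}` generate `P_3`. -/
lemma eq_top_of_mem {H : Subgroup P3} (h11 : c11 ∈ H) (h21 : c21 ∈ H) (h12 : c12 ∈ H) : H = ⊤ := by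
  have h : (⊤ : Subgroup (PresentedGroup CGen3.rels)) ≤ H.comap fromC := by
    rw [← PresentedGroup.closure_range_of, Subgroup.closure_le]
    rintro _ ⟨_ | _ | _, rfl⟩ <;> simpa [fromC]
  refine eq_top_iff.2 fun g _ => ?_
  obtain ⟨g, rfl⟩ := fromC_bijective.2 g
  exact h trivial

lemma closure_normal : (Subgroup.closure {c21, c12}).Normal := by
  rw [← Subgroup.normalizer_eq_top_iff]
  have hle := Subgroup.le_normalizer (H := Subgroup.closure {c21, c12})
  refine eq_top_of_mem ?_ (hle c21_mem) (hle c12_mem)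
  rw [← inv_mul_cancel_left c21 c11]
  exact mul_mem (inv_mem (hle c21_mem))
    (Subgroup.center_le_normalizer _ c21_mul_c11_mem_center)

end Subgroups

/-- `P_3` is presented by generators `c_{11}, c_{21}, c_{12}` and relations
`c_{21}^{c_{11}^ε} = c_{21}`, `c_{12}^{c_{11}^ε} = c_{12}^{c_{21}^{-ε}}` (`ε = ±1`);
consequently `T_2^c = ⟨c_{21}, c_{12}⟩` is a normal free subgroup freely generated by
`c_{21}` and `c_{12}`, `⟨c_{11}⟩` is infinite cyclic, and `P_3 = T_2^c ⋊ ⟨c_{11}⟩`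
as an internal semidirect product. -/
theorem statement3 :
    (∃ f : PresentedGroup CGen3.rels →* P3,
      f (PresentedGroup.of CGen3.g11) = c11 ∧
      f (PresentedGroup.of CGen3.g21) = c21 ∧
      f (PresentedGroup.of CGen3.g12) = c12 ∧
      Function.Bijective f) ∧
    (Subgroup.closure {c21, c12}).Normal ∧
    (Function.Injective (FreeGroup.lift (![c21, c12] : Fin 2 → P3)) ∧
      (FreeGroup.lift (![c21, c12] : Fin 2 → P3)).range = Subgroup.closure {c21, c12}) ∧
    Function.Injective (fun k : ℤ => c11 ^ k) ∧
    Subgroup.closure {c21, c12} ⊓ Subgroup.zpowers c11 = ⊥ ∧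
    Subgroup.closure {c21, c12} ⊔ Subgroup.zpowers c11 = ⊤ := by
  have hinj : Function.Injective (fun k : ℤ => c11 ^ k) := fun k l h => by
    simpa [deg_c11_zpow] using congrArg deg h
  refine ⟨⟨fromC, rfl, rfl, rfl, fromC_bijective⟩, closure_normal, ⟨?_, ?_⟩, hinj, ?_, ?_⟩
  · exact Function.LeftInverse.injective (DFunLike.congr_fun toFree_comp_lift)
  · rw [FreeGroup.range_lift_eq_closure, Matrix.range_cons, Matrix.range_cons, Matrix.range_empty,
      Set.union_empty, Set.singleton_union]
  · rw [eq_bot_iff]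
    rintro _ ⟨h, k, rfl⟩
    have hk : deg (c11 ^ k) = 1 := closure_le_ker_deg h
    rw [deg_c11_zpow, ofAdd_eq_one] at hk
    simp [hk]
  · exact eq_top_of_mem (Subgroup.mem_sup_right (Subgroup.mem_zpowers c11))
      (Subgroup.mem_sup_left c21_mem) (Subgroup.mem_sup_left c12_mem)

end Paper
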